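/- arXiv:2007.13205 — 4 statements merged into one kernel-verified Lean document; each statement's English description precedes it below -/
import Mathlib

section
/- For n ≥ 2 and every integer k, the generating function A(n,k;u,d) = Σ_{π ∈ GS_n, |asc(π)| = k} u^{nua(π)} d^{nda(π)} satisfies the recurrence A(n,k;u,d) = (k+1+(n−1)d)·A(n−1,k;u,d) + (n−k+(n−1)u)·A(n−1,k−1;u,d), with initial condition A(1,0;u,d) = 1. -/
/-!
Every generalized permutation of length `m + 2` arises from a unique one `π` of length `m + 1`
by a unique last insertion (`sum_GS`), which multiplies the monomial `u ^ nua * d ^ nda` by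
`1`, `u` or `d` (`weight_snocGS`). It therefore suffices to count, for a word of length `m + 1`
with ascent set `A ⊆ {1, …, m}` and `a = |A|`, the insertions by their effect on `a`:

* a plain tile keeps `a` in first position and in the `a` interior gaps that are ascents, and
  raises it by one in last position and in the `m - a` other interior gaps;
* each of the `m + 1` insertions of a tile marked `↑` raises `a` by one;
* each of the `m + 1` insertions of a tile marked `↓` keeps `a`.

Collecting the words with `a = k` and `a = k - 1` (`sum_weight`) gives the two coefficients.
The inclusion `A ⊆ {1, …, m}` (`ascOf_subset`) is what makes the count of interior gaps exact
and the ascent created in last position new.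
-/

/-!
Generalized permutations as insertion histories, their ascent sets (Rules
1–5 of Herscovici), the statistics `nua` (number of `↑`-tiles) and `nda`
(number of `↓`-tiles), and the recurrence for the generating function
`A(n,k;u,d)`.
-/


/-- The possible insertions producing a generalized permutation of length `m`
from one of length `m - 1`: a plain tile `m` in one of `m` positions
(1-indexed position `i.val + 1`), or a marked tile `m↑` resp. `m↓` inserted
immediately to the left of one of the `m - 1` existing tiles
(at 1-indexed position `i.val + 1`). -/
inductive Step (m : ℕ) : Type
  | plain : Fin m → Step m
  | up : Fin (m - 1) → Step m
  | down : Fin (m - 1) → Step m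
  deriving DecidableEq, Fintype

/-- The effect of an insertion on the ascent set, following Rules 1–5.
Here `m` is the length of the word *after* the insertion and `A` is the
ascent set before the insertion. -/
def stepAsc {m : ℕ} (s : Step m) (A : Finset ℕ) : Finset ℕ :=
  match s with
  | .plain i =>
      -- plain tile `m` at position `p = i.val + 1`
      if i.val + 1 = 1 then
        -- Rule 1: insertion in the first position
        A.image (· + 1)
      else if i.val + 1 = m then
        -- Rule 2: insertion in the last position
        A ∪ {m - 1}
      else if i.val ∈ A then
        -- Rule 3(a): `p - 1` was an ascent
        (A.filter (· < i.val + 1)) ∪ ((A.filter (i.val + 1 ≤ ·)).image (· + 1))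
      else
        -- Rule 3(b): `p - 1` was not an ascent
        (A.filter (· < i.val + 1)) ∪ {i.val + 1} ∪
          ((A.filter (i.val + 1 ≤ ·)).image (· + 1))
  | .up i =>
      -- Rule 4: `m↑` at position `p = i.val + 1`
      (A.filter (· < i.val + 1)) ∪ {i.val + 1} ∪
        ((A.filter (i.val + 1 ≤ ·)).image (· + 1))
  | .down i =>
      -- Rule 5: `m↓` at position `p = i.val + 1`
      (A.filter (· < i.val + 1)) ∪ ((A.filter (i.val + 1 ≤ ·)).image (· + 1))

/-- The set of generalized permutations of `[n]`, identified with the set of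
valid insertion histories. -/
abbrev GS (n : ℕ) := (i : Fin (n - 1)) → Step (i.val + 2)

/-- The ascent set of a generalized permutation, computed by applying the
rules along the insertion history, starting from the trivial permutation of
`[1]` with empty ascent set. -/
def ascOf {n : ℕ} (π : GS n) : Finset ℕ :=
  (List.finRange (n - 1)).foldl (fun A i => stepAsc (π i) A) ∅


/-- Whether a step inserts a tile marked `↑`. -/
def Step.isUp {m : ℕ} : Step m → Bool
  | .up _ => true
  | _ => false

/-- Whether a step inserts a tile marked `↓`. -/
def Step.isDown {m : ℕ} : Step m → Bool
  | .down _ => true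
  | _ => false

/-- `nua π` is the number of tiles marked `↑` in the generalized permutation `π`. -/
def nua {n : ℕ} (π : GS n) : ℕ := (Finset.univ.filter fun i => (π i).isUp).card

/-- `nda π` is the number of tiles marked `↓` in the generalized permutation `π`. -/
def nda {n : ℕ} (π : GS n) : ℕ := (Finset.univ.filter fun i => (π i).isDown).card

open MvPolynomial in
/-- `A(n,k;u,d) = Σ_{π ∈ GS_n, |asc(π)| = k} u^{nua(π)} d^{nda(π)}`, an element
of `ℤ[u,d]` (with `u = X 0`, `d = X 1`), for an arbitrary integer `k`. -/
noncomputable def Agp (n : ℕ) (k : ℤ) : MvPolynomial (Fin 2) ℤ :=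
  ∑ π ∈ Finset.univ.filter fun π : GS n => ((ascOf π).card : ℤ) = k,
    X 0 ^ nua π * X 1 ^ nda π

/-! ### Sizes of ascent sets after an insertion -/

/-- Opening a gap at `p`, without filling it, keeps the number of ascents. -/
lemma card_shift (A : Finset ℕ) (p : ℕ) :
    ((A.filter (· < p)) ∪ ((A.filter (p ≤ ·)).image (· + 1))).card = A.card := by
  rw [Finset.card_union_of_disjoint, Finset.card_image_of_injective _ (add_left_injective 1)]
  · have h := Finset.card_filter_add_card_filter_not (s := A) (fun x => x < p)
    simpa only [not_lt] using h
  · rw [Finset.disjoint_left]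
    intro x hx hx'
    simp only [Finset.mem_filter, Finset.mem_image] at hx hx'
    obtain ⟨y, hy, rfl⟩ := hx'
    omega

/-- Opening a gap at `p` and filling it adds exactly one ascent. -/
lemma card_shift_insert (A : Finset ℕ) (p : ℕ) :
    ((A.filter (· < p)) ∪ {p} ∪ ((A.filter (p ≤ ·)).image (· + 1))).card = A.card + 1 := by
  have h : (A.filter (· < p)) ∪ {p} ∪ ((A.filter (p ≤ ·)).image (· + 1))
      = insert p ((A.filter (· < p)) ∪ ((A.filter (p ≤ ·)).image (· + 1))) := by
    ext x
    simp only [Finset.mem_union, Finset.mem_insert, Finset.mem_singleton]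
    tauto
  rw [h, Finset.card_insert_of_notMem, card_shift]
  simp only [Finset.mem_union, Finset.mem_filter, Finset.mem_image, not_or, not_exists]
  constructor
  · omega
  · intro x
    omega

lemma stepAsc_subset {m : ℕ} (s : Step (m + 2)) {A : Finset ℕ} (hA : A ⊆ Finset.Icc 1 m) :
    stepAsc s A ⊆ Finset.Icc 1 (m + 1) := by
  have key : ∀ x ∈ A, 1 ≤ x ∧ x ≤ m := fun x hx => Finset.mem_Icc.1 (hA hx)
  intro x hx
  rw [Finset.mem_Icc]
  cases s with
  | plain i =>
    have hi := i.isLt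
    simp only [stepAsc] at hx
    split_ifs at hx <;>
      simp only [Finset.mem_union, Finset.mem_filter, Finset.mem_image,
        Finset.mem_singleton] at hx <;> grind
  | up i =>
    have hi := i.isLt
    simp only [stepAsc, Finset.mem_union, Finset.mem_filter, Finset.mem_image,
      Finset.mem_singleton] at hx
    grind
  | down i =>
    have hi := i.isLt
    simp only [stepAsc, Finset.mem_union, Finset.mem_filter, Finset.mem_image] at hx
    grind

lemma card_stepAsc_up {m : ℕ} (i : Fin (m - 1)) (A : Finset ℕ) :
    (stepAsc (Step.up i) A).card = A.card + 1 := card_shift_insert A _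

lemma card_stepAsc_down {m : ℕ} (i : Fin (m - 1)) (A : Finset ℕ) :
    (stepAsc (Step.down i) A).card = A.card := card_shift A _

lemma card_stepAsc_plain_first {m : ℕ} (A : Finset ℕ) :
    (stepAsc (Step.plain (0 : Fin (m + 2))) A).card = A.card := by
  simp [stepAsc, Finset.card_image_of_injective _ (add_left_injective 1)]

lemma card_stepAsc_plain_last {m : ℕ} {A : Finset ℕ} (hA : A ⊆ Finset.Icc 1 m) :
    (stepAsc (Step.plain (Fin.last (m + 1))) A).card = A.card + 1 := by
  have h : m + 1 ∉ A := fun h => by simpa using hA h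
  simp [stepAsc, h]

lemma card_stepAsc_plain_mid {m : ℕ} (A : Finset ℕ) (i : Fin m) :
    (stepAsc (Step.plain (i.castSucc.succ : Fin (m + 2))) A).card
      = if i.val + 1 ∈ A then A.card else A.card + 1 := by
  have hi : i.val ≠ m := i.isLt.ne
  simp only [stepAsc, Fin.val_succ, Fin.val_castSucc]
  rw [if_neg (by omega), if_neg (by omega)]
  split_ifs
  · exact card_shift A _
  · exact card_shift_insert A _

/-! ### Summing over the last insertion -/

/-- `Step m` as a disjoint union of its three kinds of insertions. -/
def stepEquiv (m : ℕ) : (Fin m ⊕ Fin (m - 1)) ⊕ Fin (m - 1) ≃ Step m where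
  toFun
    | .inl (.inl i) => .plain i
    | .inl (.inr i) => .up i
    | .inr i => .down i
  invFun
    | .plain i => .inl (.inl i)
    | .up i => .inl (.inr i)
    | .down i => .inr i
  left_inv := by rintro ((i | i) | i) <;> rfl
  right_inv := by rintro (i | i | i) <;> rfl

lemma sum_step {M : Type*} [AddCommMonoid M] {m : ℕ} (f : Step m → M) :
    ∑ s, f s = ∑ i, f (.plain i) + ∑ i, f (.up i) + ∑ i, f (.down i) := by
  rw [← (stepEquiv m).sum_comp, Fintype.sum_sum_type, Fintype.sum_sum_type]
  rfl

/-- Among the `m` interior gaps, those at an ascent contribute `x` and the others `y`. -/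
lemma sum_gaps {R : Type*} [CommRing R] {m : ℕ} {A : Finset ℕ} (hA : A ⊆ Finset.Icc 1 m)
    (x y : R) :
    ∑ i : Fin m, (if i.val + 1 ∈ A then x else y) = A.card * x + (m - A.card) * y := by
  have h1 : ∑ i : Fin m, (if i.val + 1 ∈ A then x else y)
      = ∑ j ∈ Finset.Icc 1 m, if j ∈ A then x else y := by
    rw [Fin.sum_univ_eq_sum_range (fun i => if i + 1 ∈ A then x else y) m,
      Finset.range_eq_Ico, Finset.sum_Ico_add' (fun j => if j ∈ A then x else y) 0 m 1]
    rfl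
  have h2 : ((Finset.Icc 1 m).filter (· ∈ A)) = A := by
    ext j
    simp only [Finset.mem_filter]
    exact ⟨fun h => h.2, fun h => ⟨hA h, h⟩⟩
  have h3 := Finset.card_filter_add_card_filter_not (s := Finset.Icc 1 m) (· ∈ A)
  rw [h2, Nat.card_Icc, Nat.add_sub_cancel] at h3
  rw [h1, Finset.sum_ite, h2, Finset.sum_const, Finset.sum_const, nsmul_eq_mul, nsmul_eq_mul]
  conv_rhs => rw [← h3]
  push_cast
  ring

open MvPolynomial in
/-- The monomial contributed by a single insertion. -/
noncomputable def Step.weight {m : ℕ} : Step m → MvPolynomial (Fin 2) ℤ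
  | .plain _ => 1
  | .up _ => X 0
  | .down _ => X 1

open MvPolynomial in
/-- The recurrence at the level of a single word with ascent set `A`: the total weight of the
insertions leading to a word with `k` ascents. -/
lemma sum_weight {m : ℕ} {A : Finset ℕ} (hA : A ⊆ Finset.Icc 1 m) (k : ℤ) :
    ∑ s : Step (m + 2), (if ((stepAsc s A).card : ℤ) = k then s.weight else 0)
      = (C (k + 1) + C ((m : ℤ) + 1) * X 1) * (if (A.card : ℤ) = k then 1 else 0)
        + (C ((m : ℤ) + 2 - k) + C ((m : ℤ) + 1) * X 0)
          * (if (A.card : ℤ) = k - 1 then 1 else 0) := by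
  rw [sum_step, Fin.sum_univ_succ, Fin.sum_univ_castSucc]
  have hmid : ∀ i : Fin m,
      (if ((stepAsc (Step.plain (i.castSucc.succ : Fin (m + 2))) A).card : ℤ) = k
        then (Step.plain (i.castSucc.succ : Fin (m + 2))).weight else 0)
      = if i.val + 1 ∈ A then (if (A.card : ℤ) = k then (1 : MvPolynomial (Fin 2) ℤ) else 0)
        else (if (A.card : ℤ) + 1 = k then 1 else 0) := by
    intro i
    rw [card_stepAsc_plain_mid]
    by_cases h : i.val + 1 ∈ A <;> simp [h, Step.weight]
  simp only [hmid, Fin.succ_last]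
  rw [sum_gaps hA]
  simp only [card_stepAsc_plain_first, card_stepAsc_up, card_stepAsc_down,
    card_stepAsc_plain_last hA, Step.weight, Finset.sum_const, Finset.card_univ,
    Fintype.card_fin, nsmul_eq_mul]
  have e : (m + 2 - 1 : ℕ) = m + 1 := rfl
  rw [e]
  have hiff : ((A.card : ℤ) = k - 1) ↔ ((A.card : ℤ) + 1 = k) := by omega
  simp only [hiff]
  push_cast
  by_cases h1 : (A.card : ℤ) = k
  · have h2 : ¬ (A.card : ℤ) + 1 = k := by omega
    subst h1
    simp
    ring
  · by_cases h2 : (A.card : ℤ) + 1 = k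
    · subst h2
      simp
      ring
    · simp [h1, h2]

/-! ### Splitting off the last insertion of a history -/

/-- Extend a generalized permutation of length `m + 1` by one more insertion. -/
def snocGS {m : ℕ} (s : Step (m + 2)) (π : GS (m + 1)) : GS (m + 2) :=
  Fin.snocEquiv (fun i : Fin (m + 1) => Step (i.val + 2)) (s, π)

lemma snocGS_castSucc {m : ℕ} (s : Step (m + 2)) (π : GS (m + 1)) (i : Fin m) :
    snocGS s π i.castSucc = π i :=
  Fin.snoc_castSucc (α := fun i : Fin (m + 1) => Step (i.val + 2)) s π i

lemma snocGS_last {m : ℕ} (s : Step (m + 2)) (π : GS (m + 1)) :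
    snocGS s π (Fin.last m) = s :=
  Fin.snoc_last (α := fun i : Fin (m + 1) => Step (i.val + 2)) s π

lemma ascOf_snocGS {m : ℕ} (s : Step (m + 2)) (π : GS (m + 1)) :
    ascOf (snocGS s π) = stepAsc s (ascOf π) := by
  change (List.finRange (m + 1)).foldl (fun A i => stepAsc (snocGS s π i) A) ∅
    = stepAsc s ((List.finRange m).foldl (fun A i => stepAsc (π i) A) ∅)
  rw [List.finRange_succ_last, List.foldl_append, List.foldl_map]
  simp only [List.foldl_cons, List.foldl_nil, snocGS_castSucc]
  rw [snocGS_last]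
  rfl

lemma nua_snocGS {m : ℕ} (s : Step (m + 2)) (π : GS (m + 1)) :
    nua (snocGS s π) = nua π + if s.isUp then 1 else 0 := by
  change (Finset.univ.filter fun i : Fin (m + 1) => (snocGS s π i).isUp).card
    = (Finset.univ.filter fun i : Fin m => (π i).isUp).card + _
  rw [Finset.card_filter, Finset.card_filter, Fin.sum_univ_castSucc]
  simp only [snocGS_castSucc]
  rw [snocGS_last]

lemma nda_snocGS {m : ℕ} (s : Step (m + 2)) (π : GS (m + 1)) :
    nda (snocGS s π) = nda π + if s.isDown then 1 else 0 := by
  change (Finset.univ.filter fun i : Fin (m + 1) => (snocGS s π i).isDown).card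
    = (Finset.univ.filter fun i : Fin m => (π i).isDown).card + _
  rw [Finset.card_filter, Finset.card_filter, Fin.sum_univ_castSucc]
  simp only [snocGS_castSucc]
  rw [snocGS_last]

lemma sum_GS {M : Type*} [AddCommMonoid M] {m : ℕ} (f : GS (m + 2) → M) :
    ∑ π, f π = ∑ π : GS (m + 1), ∑ s : Step (m + 2), f (snocGS s π) := by
  rw [Finset.sum_comm, ← Fintype.sum_prod_type']
  exact ((Fin.snocEquiv (fun i : Fin (m + 1) => Step (i.val + 2))).sum_comp f).symm

lemma ascOf_subset : ∀ (m : ℕ) (π : GS (m + 1)), ascOf π ⊆ Finset.Icc 1 m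
  | 0, _ => Finset.empty_subset _
  | m + 1, π => by
    obtain ⟨⟨s, ρ⟩, h⟩ :=
      (Fin.snocEquiv (fun i : Fin (m + 1) => Step (i.val + 2))).surjective π
    have h' : π = snocGS s ρ := h.symm
    rw [h', ascOf_snocGS]
    exact stepAsc_subset s (ascOf_subset m ρ)

open MvPolynomial in
lemma weight_snocGS {m : ℕ} (s : Step (m + 2)) (π : GS (m + 1)) :
    (X 0 ^ nua (snocGS s π) * X 1 ^ nda (snocGS s π) : MvPolynomial (Fin 2) ℤ)
      = X 0 ^ nua π * X 1 ^ nda π * s.weight := by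
  rw [nua_snocGS, nda_snocGS]
  cases s <;> simp [Step.isUp, Step.isDown, Step.weight] <;> ring

open MvPolynomial in
/-- `A(1,0;u,d) = 1`, and for `n ≥ 2` and every integer `k`,
`A(n,k;u,d) = (k+1+(n-1)d)·A(n-1,k;u,d) + (n-k+(n-1)u)·A(n-1,k-1;u,d)`. -/
theorem Agp_recurrence :
    Agp 1 0 = 1 ∧
      ∀ n : ℕ, 2 ≤ n → ∀ k : ℤ,
        Agp n k =
          (C (k + 1) + C ((n : ℤ) - 1) * X 1) * Agp (n - 1) k
            + (C ((n : ℤ) - k) + C ((n : ℤ) - 1) * X 0) * Agp (n - 1) (k - 1) := by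
  refine ⟨?_, ?_⟩
  · have h : ∀ π : GS 1, ((ascOf π).card : ℤ) = 0 := fun _ => rfl
    have hu : ∀ π : GS 1, nua π = 0 := fun _ => rfl
    have hd : ∀ π : GS 1, nda π = 0 := fun _ => rfl
    have hc : Fintype.card (GS 1) = 1 := rfl
    simp [Agp, h, hu, hd, hc]
  · intro n hn k
    obtain ⟨m, rfl⟩ := Nat.exists_eq_add_of_le' hn
    have e : m + 2 - 1 = m + 1 := rfl
    have e' : ((m + 2 : ℕ) : ℤ) - 1 = (m : ℤ) + 1 := by push_cast; ring
    have e'' : ((m + 2 : ℕ) : ℤ) = (m : ℤ) + 2 := by push_cast; ring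
    rw [e, e', e'']
    simp only [Agp, Finset.sum_filter]
    rw [sum_GS, Finset.mul_sum, Finset.mul_sum, ← Finset.sum_add_distrib]
    refine Finset.sum_congr rfl fun π _ => ?_
    have key := congrArg (fun q => (X 0 ^ nua π * X 1 ^ nda π) * q)
      (sum_weight (ascOf_subset m π) k)
    simp only [Finset.mul_sum] at key
    calc _ = _ := Finset.sum_congr rfl fun s _ => by
            rw [ascOf_snocGS, weight_snocGS, mul_ite, mul_zero]
      _ = _ := key
      _ = _ := by split_ifs <;> ring
end

section
/- For every n ≥ 1, the identity A(n, n−1; u, d) = ∏_{j=0}^{n−1} (j·u + 1) holds in the polynomial ring ℤ[u,d]; in particular A(n,n−1;u,d) does not involve the variable d, and equals Σ_{j=0}^{n} |s(n, n−j)| · u^j where |s(n,j)| are the unsigned Stirling numbers of the first kind. -/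
/-!
At `k = n - 1` the first term of the recurrence carries the factor `A(n-1, n-1)`, which vanishes
because `A(m, k) = 0` for `k ≥ m` (`A_eq_zero_of_le`). The coefficient of the second term is
`1 + (n-1)u`, so the product formula follows by induction. The Stirling sum satisfies the same
one-step recurrence in `n` (`prod_eq_sum_stirling1`): this is the recurrence of `|s(n,j)|`, where
the shift of the summation index costs nothing because `|s(n,n+1)| = 0` and `n·|s(n,0)| = 0`.
-/

open MvPolynomial in
/-- The polynomials `A(n,k;u,d) ∈ ℤ[u,d]` (with `u = X 0`, `d = X 1`), defined
for `n ≥ 1` and `k : ℤ` by `A(1,0) = 1`, `A(1,k) = 0` for `k ≠ 0`, and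
`A(n,k) = (k+1+(n-1)d)·A(n-1,k) + (n-k+(n-1)u)·A(n-1,k-1)` for `n ≥ 2`.
(The value at `n = 0` is irrelevant and set to `0`.) -/
noncomputable def A : ℕ → ℤ → MvPolynomial (Fin 2) ℤ
  | 0, _ => 0
  | 1, k => if k = 0 then 1 else 0
  | n + 2, k =>
      (C (k + 1) + C ((n : ℤ) + 1) * X 1) * A (n + 1) k
        + (C ((n : ℤ) + 2 - k) + C ((n : ℤ) + 1) * X 0) * A (n + 1) (k - 1)

/-- The unsigned Stirling numbers of the first kind `|s(n,j)|`, defined by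
`|s(0,0)| = 1`, `|s(n,j)| = 0` for `j > n` (and for `j < 0`, which does not
occur for natural `j`), and `|s(n+1,j)| = n·|s(n,j)| + |s(n,j-1)|`. -/
def stirling1 : ℕ → ℕ → ℕ
  | 0, 0 => 1
  | 0, _ + 1 => 0
  | _ + 1, 0 => 0
  | n + 1, j + 1 => n * stirling1 n (j + 1) + stirling1 n j

theorem A_eq_zero_of_le (n : ℕ) : ∀ k : ℤ, (n : ℤ) + 1 ≤ k → A (n + 1) k = 0 := by
  induction n with
  | zero =>
    intro k hk
    have : k ≠ 0 := by push_cast at hk; omega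
    simp [A, this]
  | succ n ih =>
    intro k hk
    push_cast at hk
    rw [A, ih k (by omega), ih (k - 1) (by omega)]
    simp

theorem stirling1_eq_zero_of_lt : ∀ n j : ℕ, n < j → stirling1 n j = 0
  | 0, j + 1, _ => by simp [stirling1]
  | n + 1, j + 1, h => by
    simp [stirling1, stirling1_eq_zero_of_lt n (j + 1) (by omega),
      stirling1_eq_zero_of_lt n j (by omega)]

theorem mul_stirling1_zero (n : ℕ) : n * stirling1 n 0 = 0 := by
  cases n <;> simp [stirling1]

open MvPolynomial in
theorem A_top_eq_prod_succ (n : ℕ) :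
    A (n + 1) (n : ℤ) = ∏ j ∈ Finset.range (n + 1), (C (j : ℤ) * X 0 + 1) := by
  induction n with
  | zero => simp [A]
  | succ n ih =>
    rw [A, A_eq_zero_of_le n _ (by push_cast; omega), Finset.prod_range_succ, ← ih]
    have h1 : ((n + 1 : ℕ) : ℤ) - 1 = n := by push_cast; ring
    have h2 : (n : ℤ) + 2 - ((n + 1 : ℕ) : ℤ) = 1 := by push_cast; ring
    rw [h1, h2]
    push_cast
    simp only [map_one]
    ring

open MvPolynomial in
theorem prod_eq_sum_stirling1 (n : ℕ) :
    (∏ j ∈ Finset.range n, (C (j : ℤ) * X 0 + 1) : MvPolynomial (Fin 2) ℤ) =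
      ∑ j ∈ Finset.range (n + 1), C ((stirling1 n (n - j) : ℤ)) * X 0 ^ j := by
  induction n with
  | zero => simp [stirling1]
  | succ n ih =>
    rw [Finset.prod_range_succ, ih, Finset.sum_range_succ _ (n + 1)]
    have hterm : ∀ j ∈ Finset.range (n + 1),
        (C ((stirling1 (n + 1) (n + 1 - j) : ℤ)) * X 0 ^ j : MvPolynomial (Fin 2) ℤ) =
          C ((n : ℤ) * (stirling1 n (n + 1 - j) : ℤ)) * X 0 ^ j
            + C ((stirling1 n (n - j) : ℤ)) * X 0 ^ j := by
      intro j hj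
      have hj' : n + 1 - j = (n - j) + 1 := by
        have := Finset.mem_range.mp hj
        omega
      rw [hj', stirling1]
      push_cast
      rw [map_add]
      ring
    -- Multiplication by `n·u` shifts the index; both boundary terms vanish.
    have hshift : (∑ j ∈ Finset.range (n + 1),
          C ((n : ℤ) * (stirling1 n (n + 1 - j) : ℤ)) * X 0 ^ j : MvPolynomial (Fin 2) ℤ) =
        (∑ j ∈ Finset.range (n + 1), C ((stirling1 n (n - j) : ℤ)) * X 0 ^ j)
          * (C (n : ℤ) * X 0) := by
      have hz : (n : ℤ) * (stirling1 n 0 : ℤ) = 0 := by exact_mod_cast mul_stirling1_zero n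
      have hz' : (C (n : ℤ) * C (stirling1 n 0 : ℤ) : MvPolynomial (Fin 2) ℤ) = 0 := by
        rw [← map_mul, hz, map_zero]
      rw [Finset.sum_range_succ', Finset.sum_range_succ, add_mul, Finset.sum_mul]
      congr 1
      · refine Finset.sum_congr rfl fun j _ => ?_
        rw [Nat.add_sub_add_right, map_mul]
        ring
      · rw [Nat.sub_zero, Nat.sub_self, stirling1_eq_zero_of_lt n (n + 1) (by omega)]
        simp only [Nat.cast_zero, mul_zero, map_zero, zero_mul]
        linear_combination (-(X 0 ^ n * X 0)) * hz'
    rw [Finset.sum_congr rfl hterm, Finset.sum_add_distrib, hshift, Nat.sub_self]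
    simp only [stirling1, Nat.cast_zero, map_zero, zero_mul]
    ring

open MvPolynomial in
/-- For every `n ≥ 1`, `A(n,n-1;u,d) = ∏_{j=0}^{n-1} (j·u + 1)` in `ℤ[u,d]`;
in particular it does not involve the variable `d`, and it equals
`Σ_{j=0}^{n} |s(n, n-j)| · u^j` where `|s(n,j)|` are the unsigned Stirling
numbers of the first kind. -/
theorem A_top_eq_prod (n : ℕ) (hn : 1 ≤ n) :
    A n ((n : ℤ) - 1) = ∏ j ∈ Finset.range n, (C (j : ℤ) * X 0 + 1) ∧
      A n ((n : ℤ) - 1) =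
        ∑ j ∈ Finset.range (n + 1), C ((stirling1 n (n - j) : ℤ)) * X 0 ^ j := by
  obtain ⟨m, rfl⟩ : ∃ m, n = m + 1 := ⟨n - 1, by omega⟩
  have h : ((m + 1 : ℕ) : ℤ) - 1 = m := by push_cast; ring
  rw [h, ← prod_eq_sum_stirling1]
  exact ⟨A_top_eq_prod_succ m, A_top_eq_prod_succ m⟩
end

section
/- For every n ≥ 1, the polynomial A(n, 0; u, d) is obtained from A(n, n−1; u, d) by exchanging the variables u and d; that is, A(n,0;u,d) = A(n,n−1;d,u) in ℤ[u,d]. -/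
open MvPolynomial in
/-- The symmetry `A(n,k;u,d) = A(n,n-1-k;d,u)`. It also holds for
the conventional value `0` at `n = 0`. -/
lemma A_eq_rename_swap (n : ℕ) (k : ℤ) :
    A n k = rename (Equiv.swap (0 : Fin 2) 1) (A n ((n : ℤ) - 1 - k)) := by
  induction n generalizing k with
  | zero => simp [A]
  | succ n ih =>
    cases n with
    | zero => by_cases h : k = 0 <;> simp [A, h]
    | succ n =>
      have e₁ : ((n + 1 + 1 : ℕ) : ℤ) - 1 - k = ((n + 1 : ℕ) : ℤ) - 1 - (k - 1) := by
        push_cast; ring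
      have e₂ : ((n + 1 : ℕ) : ℤ) - 1 - (k - 1) - 1 = ((n + 1 : ℕ) : ℤ) - 1 - k := by ring
      rw [e₁, A, A, e₂, ih k, ih (k - 1)]
      simp only [map_add, map_mul, rename_C, rename_X, Equiv.swap_apply_left,
        Equiv.swap_apply_right]
      push_cast
      simp only [map_add, map_sub, map_one, map_ofNat]
      ring

open MvPolynomial in
/-- For every `n ≥ 1`, `A(n,0;u,d)` is obtained from `A(n,n-1;u,d)` by
exchanging the variables `u` and `d`: `A(n,0;u,d) = A(n,n-1;d,u)`. -/
theorem A_zero_eq_swap_A_top (n : ℕ) (hn : 1 ≤ n) :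
    A n 0 = rename (Equiv.swap (0 : Fin 2) 1) (A n ((n : ℤ) - 1)) := by
  simpa using A_eq_rename_swap n 0
end

section
/- For every n ≥ 1, Σ_{k=0}^{n−1} A(n,k;1,1) = ∏_{k=1}^{n} (3k−2); that is, evaluating the polynomials A(n,k;u,d) at u = d = 1 and summing over k = 0, …, n−1 yields the product 1·4·7···(3n−2). -/
theorem A_eq_zero_of_neg (n : ℕ) : ∀ k : ℤ, k < 0 → A (n + 1) k = 0 := by
  induction n with
  | zero => intro k hk; simp [A, hk.ne]
  | succ n ih =>
    intro k hk
    rw [A, ih k hk, ih (k - 1) (by lia)]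
    simp

/-- The row sum is multiplied by `3(n + 2) - 2` in passing from row `n + 1` to row `n + 2`. -/
theorem sum_A_succ (n : ℕ) :
    ∑ k ∈ Finset.range (n + 2), MvPolynomial.eval (fun _ => (1 : ℤ)) (A (n + 2) (k : ℤ)) =
      (3 * (n : ℤ) + 4) *
        ∑ k ∈ Finset.range (n + 1), MvPolynomial.eval (fun _ => (1 : ℤ)) (A (n + 1) (k : ℤ)) := by
  simp only [A, map_add, map_mul, MvPolynomial.eval_C, MvPolynomial.eval_X, mul_one,
    Finset.sum_add_distrib]
  -- The top term of the first sum and the bottom term of the second lie outside the support.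
  rw [Finset.sum_range_succ, Finset.sum_range_succ' _ (n + 1),
    A_eq_zero_of_le n ((n + 1 : ℕ) : ℤ) (by push_cast; rfl),
    A_eq_zero_of_neg n (((0 : ℕ) : ℤ) - 1) (by simp)]
  simp only [map_zero, mul_zero, add_zero]
  rw [← Finset.sum_add_distrib, Finset.mul_sum]
  refine Finset.sum_congr rfl fun k _ => ?_
  rw [show ((k + 1 : ℕ) : ℤ) - 1 = k by push_cast; ring]
  push_cast
  ring

open MvPolynomial in
/-- For every `n ≥ 1`, evaluating the polynomials `A(n,k;u,d)` at `u = d = 1`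
and summing over `k = 0, …, n-1` yields `∏_{k=1}^{n} (3k-2) = 1·4·7···(3n-2)`. -/
theorem sum_A_one_one (n : ℕ) (hn : 1 ≤ n) :
    ∑ k ∈ Finset.range n, MvPolynomial.eval (fun _ => (1 : ℤ)) (A n (k : ℤ)) =
      ((∏ k ∈ Finset.Icc 1 n, (3 * k - 2) : ℕ) : ℤ) := by
  induction n, hn using Nat.le_induction with
  | base => simp [A]
  | succ n hn ih =>
    obtain ⟨m, rfl⟩ : ∃ m, n = m + 1 := ⟨n - 1, by lia⟩
    rw [sum_A_succ, ih, Finset.prod_Icc_succ_top (show 1 ≤ m + 1 + 1 by lia),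
      show 3 * (m + 1 + 1) - 2 = 3 * m + 4 by lia, Nat.cast_mul, mul_comm]
    push_cast
    rfl
end
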